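/- Let φ : X → ℝ be a continuous potential on X = 𝒜^(ℤ^d) such that Σ_{n≥1} n^{d−1} var_n φ < ∞. Then every equilibrium state μ ∈ ES(φ) (at β = 1) is fully supported: for every finite Λ ⊂ ℤ^d and every w : Λ → 𝒜, μ({x ∈ X : x|_Λ = w}) > 0. -/

import Mathlib

open MeasureTheory Filter Topology
open scoped ENNReal Classical

namespace Freezing

/-- The configuration space `X = 𝒜^(ℤ^d)`. -/
abbrev Cfg (d : ℕ) (A : Type) : Type := (Fin d → ℤ) → A

section Defs

variable {d : ℕ} {A : Type} [Fintype A] [TopologicalSpace A] [DiscreteTopology A]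
  [MeasurableSpace A] [BorelSpace A]

/-- The shift action: `(σ^n x)_m = x_{n+m}`. -/
def shift (n : Fin d → ℤ) (x : Cfg d A) : Cfg d A := fun m => x (n + m)

/-- Shift-invariance of a measure. -/
def Invariant (μ : Measure (Cfg d A)) : Prop :=
  ∀ n : Fin d → ℤ, Measure.map (shift n) μ = μ

/-- Cylinder set `[w]` for a pattern `w` on `E_n = ([0,n-1] ∩ ℤ)^d`. -/
def cylE (n : ℕ) (w : (Fin d → Fin n) → A) : Set (Cfg d A) :=
  { x | ∀ m : Fin d → Fin n, x (fun i => ((m i : ℕ) : ℤ)) = w m }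

/-- Measure-theoretic entropy `h(μ) = inf_{n ≥ 1} n^{-d} Σ_w (-μ[w] log μ[w])`. -/
noncomputable def entropy (μ : Measure (Cfg d A)) : ℝ :=
  ⨅ n : {n : ℕ // 1 ≤ n},
    ((n.1 : ℝ) ^ d)⁻¹ *
      ∑ w : (Fin d → Fin n.1) → A, Real.negMulLog (μ (cylE n.1 w)).toReal

/-- Pressure `p_φ(β) = sup { h(μ) + β ∫ φ dμ }` over shift-invariant probability measures. -/
noncomputable def pressure (φ : Cfg d A → ℝ) (β : ℝ) : ℝ :=
  sSup { r | ∃ μ : Measure (Cfg d A), IsProbabilityMeasure μ ∧ Invariant μ ∧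
    r = entropy μ + β * ∫ x, φ x ∂μ }

/-- The set of equilibrium states of `βφ`. -/
def ES (φ : Cfg d A → ℝ) (β : ℝ) : Set (Measure (Cfg d A)) :=
  { μ | IsProbabilityMeasure μ ∧ Invariant μ ∧
      entropy μ + β * ∫ x, φ x ∂μ = pressure φ β }

/-- `φ` has a freezing phase transition at `βc`. -/
def FreezingPT (φ : Cfg d A → ℝ) (βc : ℝ) : Prop :=
  (∀ β β' : ℝ, βc < β → βc < β' → ES φ β = ES φ β') ∧
  (∀ β β' : ℝ, β < βc → βc < β' → ES φ β ≠ ES φ β')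

/-- `s_φ = sup { ∫ φ dμ }` over shift-invariant probability measures. -/
noncomputable def sPhi (φ : Cfg d A → ℝ) : ℝ :=
  sSup { r | ∃ μ : Measure (Cfg d A), IsProbabilityMeasure μ ∧ Invariant μ ∧
    r = ∫ x, φ x ∂μ }

/-- The set of maximizing measures of `φ`. -/
def MM (φ : Cfg d A → ℝ) : Set (Measure (Cfg d A)) :=
  { μ | IsProbabilityMeasure μ ∧ Invariant μ ∧ (∫ x, φ x ∂μ) = sPhi φ }

/-- `h_φ = sup { h(η) : η ∈ MM(φ) }`. -/
noncomputable def hPhi (φ : Cfg d A → ℝ) : ℝ :=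
  sSup { r | ∃ μ ∈ MM φ, r = entropy μ }

/-- The zero-temperature accumulation points of `φ`. -/
def ZTA (φ : Cfg d A → ℝ) : Set (Measure (Cfg d A)) :=
  { μ | IsProbabilityMeasure μ ∧ Invariant μ ∧
      ∃ (β : ℕ → ℝ) (μs : ℕ → Measure (Cfg d A)),
        Tendsto β atTop atTop ∧ (∀ k, μs k ∈ ES φ (β k)) ∧
        ∀ f : Cfg d A → ℝ, Continuous f →
          Tendsto (fun k => ∫ x, f x ∂(μs k)) atTop (𝓝 (∫ x, f x ∂μ)) }

/-- A subshift: nonempty, closed, invariant under every shift. -/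
def IsSubshift (X₀ : Set (Cfg d A)) : Prop :=
  X₀.Nonempty ∧ IsClosed X₀ ∧ ∀ n : Fin d → ℤ, ∀ x ∈ X₀, shift n x ∈ X₀

/-- The language `L_{E_n}(X₀)`: patterns on `E_n` appearing at the origin of points of `X₀`. -/
def langE (X₀ : Set (Cfg d A)) (n : ℕ) : Set ((Fin d → Fin n) → A) :=
  { w | ∃ x ∈ X₀, ∀ m : Fin d → Fin n, x (fun i => ((m i : ℕ) : ℤ)) = w m }

/-- Topological entropy `h_top(X₀) = inf_{n ≥ 1} n^{-d} log |L_{E_n}(X₀)|`. -/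
noncomputable def topEnt (X₀ : Set (Cfg d A)) : ℝ :=
  ⨅ n : {n : ℕ // 1 ≤ n}, ((n.1 : ℝ) ^ d)⁻¹ * Real.log ((langE X₀ n.1).ncard)

/-- A measure of maximal entropy on the subshift `X₀`. -/
def IsMME (X₀ : Set (Cfg d A)) (μ : Measure (Cfg d A)) : Prop :=
  IsProbabilityMeasure μ ∧ Invariant μ ∧ μ X₀ = 1 ∧ entropy μ = topEnt X₀

/-- Ergodicity: invariant Borel sets have measure `0` or `1`. -/
def ErgodicInv (μ : Measure (Cfg d A)) : Prop :=
  ∀ s : Set (Cfg d A), MeasurableSet s → (∀ n : Fin d → ℤ, shift n ⁻¹' s = s) →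
    μ s = 0 ∨ μ s = 1

/-- The `n`-th variation `var_n φ`, over pairs agreeing on `B_n = ([-n,n] ∩ ℤ)^d`. -/
noncomputable def varPot (φ : Cfg d A → ℝ) (n : ℕ) : ℝ :=
  sSup { r | ∃ x y : Cfg d A,
    (∀ m : Fin d → ℤ, (∀ i, |m i| ≤ (n : ℤ)) → x m = y m) ∧ r = |φ x - φ y| }

/-- Sup-norm `‖m‖_∞` of a site `m ∈ ℤ^d`. -/
def supNorm (m : Fin d → ℤ) : ℕ := Finset.univ.sup fun i => (m i).natAbs

/-- The metric `dist(x,y) = 2^{-min{‖n‖_∞ : x_n ≠ y_n}}`. -/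
noncomputable def cfgDist (x y : Cfg d A) : ℝ :=
  if x = y then 0
  else (2 : ℝ) ^
    (-((sInf { k : ℕ | ∃ m : Fin d → ℤ, supNorm m = k ∧ x m ≠ y m } : ℕ) : ℤ))

/-- Distance from a point to a subshift. -/
noncomputable def distToSub (X₀ : Set (Cfg d A)) (x : Cfg d A) : ℝ :=
  sInf { r | ∃ y ∈ X₀, r = cfgDist x y }

end Defs

/-!
Suppose an equilibrium state `μ` gave mass zero to a pattern `u` on `E_k`. Tile `ℤ^d` by
translates of `E_k` and, independently with small probability `p`, write `u` into each tile. As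
`u` never occurs in a `μ`-typical configuration, the result reveals which tiles were written. So
the entropy per tile grows by the entropy of the coins, which is at least `p log p⁻¹`, minus at
most a constant times `p` for the contents that were erased. The energy changes by at most the
oscillation of `φ` at the distance of the nearest written tile, hence on average by at most `p ∑ₙ
osc(φ, ‖n‖)`, and this sum converges because `∑ n^(d-1) var_n φ` does. Averaging over translates
restores shift-invariance, and for small `p` the resulting measure has a larger free energy than
`μ`.
-/

section ShannonEntropy

theorem ae_measureReal_singleton_pos {S : Type*} [Countable S] [MeasurableSpace S]
    (μ : Measure S) [IsFiniteMeasure μ] : ∀ᵐ s ∂μ, 0 < μ.real {s} :=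
  ae_iff_of_countable.2 fun _ hs => ENNReal.toReal_pos hs (measure_ne_top _ _)

theorem ae_map_measureReal_singleton_pos {Ω T : Type*} [MeasurableSpace Ω] [Countable T]
    [MeasurableSpace T] (μ : Measure Ω) [IsFiniteMeasure μ] {f : Ω → T} (hf : Measurable f) :
    ∀ᵐ ω ∂μ, 0 < (μ.map f).real {f ω} :=
  ae_of_ae_map hf.aemeasurable (ae_measureReal_singleton_pos (μ.map f))

theorem sum_div_fiber_card_bound_le {S T : Type*} [Fintype T] (s : Finset S) (f : S → T)
    {M : T → ℕ} {P : T → ℝ} (hP : ∀ y, 0 ≤ P y) (hM : ∀ y, Finset.card {x ∈ s | f x = y} ≤ M y) :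
    ∑ x ∈ s, P (f x) / M (f x) ≤ ∑ y, P y := by
  rw [← Finset.sum_fiberwise s f]
  refine Finset.sum_le_sum fun y _ => ?_
  calc ∑ x ∈ s with f x = y, P (f x) / M (f x)
      = Finset.card {x ∈ s | f x = y} * (P y / M y) := by
        rw [← nsmul_eq_mul]
        exact Finset.sum_eq_card_nsmul fun x hx => by rw [(Finset.mem_filter.1 hx).2]
    _ ≤ M y * (P y / M y) := by
        gcongr
        exacts [div_nonneg (hP y) (Nat.cast_nonneg _), hM y]
    _ ≤ P y := by
        rcases eq_or_ne (M y : ℝ) 0 with h | h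
        · simp [h, hP y]
        · rw [mul_div_cancel₀ _ h]

variable {S T : Type*} [Fintype S] [MeasurableSpace S] [MeasurableSingletonClass S]
  [Fintype T] [MeasurableSpace T] [MeasurableSingletonClass T]

/-- The Shannon entropy, in nats, of a measure on a finite space. -/
noncomputable def shannonEntropy {S : Type*} [Fintype S] [MeasurableSpace S] (μ : Measure S) : ℝ :=
  ∑ s, Real.negMulLog (μ.real {s})

theorem shannonEntropy_eq_integral (μ : Measure S) [IsFiniteMeasure μ] :
    shannonEntropy μ = ∫ s, -Real.log (μ.real {s}) ∂μ := by
  rw [integral_fintype .of_finite]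
  simp only [shannonEntropy, Real.negMulLog, smul_eq_mul, neg_mul, mul_neg]

theorem shannonEntropy_le_integral_neg_log (μ : Measure S) [IsProbabilityMeasure μ] {q : S → ℝ}
    (hq : ∀ s, 0 ≤ q s) (hpos : ∀ᵐ s ∂μ, 0 < q s) (hsum : ∑ s, q s ≤ 1) :
    shannonEntropy μ ≤ ∫ s, -Real.log (q s) ∂μ := by
  have gibbs : ∀ s, Real.negMulLog (μ.real {s})
      ≤ μ.real {s} * -Real.log (q s) + (q s - μ.real {s}) := by
    intro s
    rcases eq_or_ne (μ {s}) 0 with hs | hs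
    · simpa [measureReal_def, hs] using hq s
    · have hps : 0 < μ.real {s} := ENNReal.toReal_pos hs (measure_ne_top _ _)
      have hqs : 0 < q s := ae_iff_of_countable.1 hpos s hs
      have hlog := mul_le_mul_of_nonneg_left
        (Real.log_le_sub_one_of_pos (div_pos hqs hps)) hps.le
      rw [Real.log_div hqs.ne' hps.ne', mul_sub, mul_sub, mul_div_cancel₀ _ hps.ne'] at hlog
      rw [Real.negMulLog]
      linarith
  rw [integral_fintype .of_finite]
  calc shannonEntropy μ
      ≤ ∑ s, (μ.real {s} * -Real.log (q s) + (q s - μ.real {s})) :=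
        Finset.sum_le_sum fun s _ => gibbs s
    _ = ∑ s, μ.real {s} • -Real.log (q s) + (∑ s, q s - 1) := by
        rw [Finset.sum_add_distrib, Finset.sum_sub_distrib, sum_measureReal_singleton,
          Finset.coe_univ, probReal_univ]
        rfl
    _ ≤ ∑ s, μ.real {s} • -Real.log (q s) := by linarith

theorem shannonEntropy_map {Ω : Type*} [MeasurableSpace Ω] (μ : Measure Ω) [IsFiniteMeasure μ]
    {f : Ω → T} (hf : Measurable f) :
    shannonEntropy (μ.map f) = ∫ ω, -Real.log ((μ.map f).real {f ω}) ∂μ := by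
  rw [shannonEntropy_eq_integral, integral_map hf.aemeasurable
    (Measurable.of_discrete).aestronglyMeasurable]

theorem shannonEntropy_le_map_add_integral_log_card (μ : Measure S) [IsProbabilityMeasure μ]
    (f : S → T) {M : T → ℕ} (hM : ∀ y, Finset.card {s | μ {s} ≠ 0 ∧ f s = y} ≤ M y) :
    shannonEntropy μ ≤ shannonEntropy (μ.map f) + ∫ s, Real.log (M (f s)) ∂μ := by
  have hf : Measurable f := .of_discrete
  have : IsProbabilityMeasure (μ.map f) := Measure.isProbabilityMeasure_map hf.aemeasurable
  have hsupp : ∀ᵐ s ∂μ, μ {s} ≠ 0 := ae_iff_of_countable.2 fun _ hs => hs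
  have hMpos : ∀ᵐ s ∂μ, 0 < (M (f s) : ℝ) := ae_iff_of_countable.2 fun s hs =>
    Nat.cast_pos.2 ((Finset.card_pos.2 ⟨s, by simp [hs]⟩).trans_le (hM (f s)))
  have hPpos : ∀ᵐ s ∂μ, 0 < (μ.map f).real {f s} := ae_map_measureReal_singleton_pos μ hf
  set q : S → ℝ := fun s => if μ {s} ≠ 0 then (μ.map f).real {f s} / M (f s) else 0 with hq
  have hsum : ∑ s, q s ≤ 1 := by
    rw [← Finset.sum_filter]
    refine (sum_div_fiber_card_bound_le _ f (fun _ => measureReal_nonneg) fun y => ?_).trans_eq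
      (by simp : ∑ y, (μ.map f).real {y} = 1)
    simpa only [Finset.filter_filter] using hM y
  calc shannonEntropy μ ≤ ∫ s, -Real.log (q s) ∂μ := by
        refine shannonEntropy_le_integral_neg_log μ (fun s => ?_) ?_ hsum
        · simp only [hq]; split_ifs <;> positivity
        · filter_upwards [hsupp, hMpos, hPpos] with s hs hMs hPs
          simpa only [hq, if_pos hs] using div_pos hPs hMs
    _ = ∫ s, (-Real.log ((μ.map f).real {f s}) + Real.log (M (f s))) ∂μ := by
        refine integral_congr_ae ?_
        filter_upwards [hsupp, hMpos, hPpos] with s hs hMs hPs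
        simp only [hq, if_pos hs]
        rw [Real.log_div hPs.ne' hMs.ne']
        ring
    _ = shannonEntropy (μ.map f) + ∫ s, Real.log (M (f s)) ∂μ := by
        rw [integral_add .of_finite .of_finite, shannonEntropy_map _ hf]

theorem shannonEntropy_map_le (μ : Measure S) [IsFiniteMeasure μ] (f : S → T) :
    shannonEntropy (μ.map f) ≤ shannonEntropy μ := by
  rw [shannonEntropy_map _ .of_discrete, shannonEntropy_eq_integral]
  refine integral_mono_ae .of_finite .of_finite ?_
  filter_upwards [ae_measureReal_singleton_pos μ] with s hs
  rw [neg_le_neg_iff, map_measureReal_apply .of_discrete (measurableSet_singleton _)]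
  exact Real.log_le_log hs (measureReal_mono (by simp))

theorem shannonEntropy_map_of_injective (μ : Measure S) [IsFiniteMeasure μ] {f : S → T}
    (hf : Function.Injective f) : shannonEntropy (μ.map f) = shannonEntropy μ := by
  rw [shannonEntropy_map _ .of_discrete, shannonEntropy_eq_integral]
  refine integral_congr_ae (.of_forall fun s => ?_)
  dsimp only
  rw [map_measureReal_apply .of_discrete (measurableSet_singleton _), ← Set.image_singleton,
    hf.preimage_image]

theorem shannonEntropy_prod (μ : Measure S) (ν : Measure T) [IsProbabilityMeasure μ]
    [IsProbabilityMeasure ν] :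
    shannonEntropy (μ.prod ν) = shannonEntropy μ + shannonEntropy ν := by
  have hμ : ∑ s, μ.real {s} = 1 := by simp
  have hν : ∑ t, ν.real {t} = 1 := by simp
  simp only [shannonEntropy, Fintype.sum_prod_type, ← Set.singleton_prod_singleton,
    measureReal_prod_prod, Real.negMulLog_mul, Finset.sum_add_distrib, ← Finset.mul_sum,
    ← Finset.sum_mul, hμ, hν, one_mul]

theorem shannonEntropy_pi {ι : Type*} [Fintype ι] [DecidableEq ι]
    (μ : ι → Measure S) [∀ i, IsProbabilityMeasure (μ i)] :
    shannonEntropy (Measure.pi μ) = ∑ i, shannonEntropy (μ i) := by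
  have hsingle : ∀ x : ι → S, (Measure.pi μ).real {x} = ∏ i, (μ i).real {x i} := fun x => by
    rw [measureReal_def, Measure.pi_singleton, ENNReal.toReal_prod]; rfl
  have hpos : ∀ᵐ x ∂Measure.pi μ, ∀ i, 0 < (μ i).real {x i} := ae_all_iff.2 fun i =>
    (measurePreserving_eval μ i).quasiMeasurePreserving.ae (ae_measureReal_singleton_pos (μ i))
  calc shannonEntropy (Measure.pi μ)
      = ∫ x, ∑ i, -Real.log ((μ i).real {x i}) ∂Measure.pi μ := by
        rw [shannonEntropy_eq_integral]
        refine integral_congr_ae ?_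
        filter_upwards [hpos] with x hx
        rw [hsingle, Real.log_prod fun i _ => (hx i).ne', Finset.sum_neg_distrib]
    _ = ∑ i, shannonEntropy (μ i) := by
        rw [integral_finsetSum _ fun _ _ => .of_finite]
        refine Finset.sum_congr rfl fun i _ => ?_
        rw [shannonEntropy_eq_integral]
        exact integral_comp_eval (μ := μ) (f := fun s => -Real.log ((μ i).real {s}))
          (Measurable.of_discrete).aestronglyMeasurable

theorem shannonEntropy_le_sum_map_eval {ι : Type*} [Fintype ι] [DecidableEq ι]
    (μ : Measure (ι → S)) [IsProbabilityMeasure μ] :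
    shannonEntropy μ ≤ ∑ i, shannonEntropy (μ.map (Function.eval i)) := by
  have hprob : ∀ i, IsProbabilityMeasure (μ.map (Function.eval i)) := fun i =>
    Measure.isProbabilityMeasure_map (measurable_pi_apply i).aemeasurable
  have hpos : ∀ᵐ x ∂μ, ∀ i, 0 < (μ.map (Function.eval i)).real {x i} := ae_all_iff.2 fun i =>
    ae_map_measureReal_singleton_pos μ (measurable_pi_apply i)
  calc shannonEntropy μ
      ≤ ∫ x, -Real.log (∏ i, (μ.map (Function.eval i)).real {x i}) ∂μ := by
        refine shannonEntropy_le_integral_neg_log μ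
          (fun _ => Finset.prod_nonneg fun _ _ => measureReal_nonneg)
          (hpos.mono fun _ hx => Finset.prod_pos fun i _ => hx i) (le_of_eq ?_)
        rw [← Fintype.prod_sum fun i s => (μ.map (Function.eval i)).real {s}]
        simp
    _ = ∫ x, ∑ i, -Real.log ((μ.map (Function.eval i)).real {x i}) ∂μ := by
        refine integral_congr_ae (hpos.mono fun x hx => ?_)
        simp only [Real.log_prod fun i _ => (hx i).ne', Finset.sum_neg_distrib]
    _ = ∑ i, shannonEntropy (μ.map (Function.eval i)) := by
        rw [integral_finsetSum _ fun _ _ => .of_finite]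
        exact Finset.sum_congr rfl fun i _ =>
          (shannonEntropy_map μ (measurable_pi_apply i)).symm

theorem shannonEntropy_nonneg {S : Type*} [Fintype S] [MeasurableSpace S] (μ : Measure S)
    [IsProbabilityMeasure μ] : 0 ≤ shannonEntropy μ :=
  Finset.sum_nonneg fun _ _ => Real.negMulLog_nonneg measureReal_nonneg measureReal_le_one

theorem shannonEntropy_le_log_card (μ : Measure S) [IsProbabilityMeasure μ] :
    shannonEntropy μ ≤ Real.log (Fintype.card S) := by
  have hS : Nonempty S := nonempty_of_isProbabilityMeasure μ
  calc shannonEntropy μ ≤ ∫ _, -Real.log (Fintype.card S : ℝ)⁻¹ ∂μ :=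
        shannonEntropy_le_integral_neg_log μ (fun _ => by positivity)
          (.of_forall fun _ => by positivity) (by simp)
    _ = Real.log (Fintype.card S) := by simp

end ShannonEntropy

section Replacement

variable {T B : Type*}

/-- Overwrite with the symbol `v` the coordinates of `p.2` selected by `p.1`. -/
def overwrite (v : B) (p : (T → Bool) × (T → B)) : T → B :=
  fun t => bif p.1 t then v else p.2 t

theorem overwrite_apply_eq_iff {v : B} {p : (T → Bool) × (T → B)} {t : T} (hp : p.2 t ≠ v) :
    overwrite v p t = v ↔ p.1 t := by
  cases h : p.1 t <;> simp [overwrite, h, hp]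

theorem eq_of_overwrite_eq {v : B} {p q : (T → Bool) × (T → B)} (hp : ∀ t, p.2 t ≠ v)
    (hq : ∀ t, q.2 t ≠ v) (hpq : overwrite v p = overwrite v q)
    (hv : ∀ t, overwrite v p t = v → p.2 t = q.2 t) : p = q := by
  have hmask : ∀ t, p.1 t = q.1 t := fun t => by
    rw [Bool.eq_iff_iff, ← overwrite_apply_eq_iff (hp t), ← overwrite_apply_eq_iff (hq t), hpq]
  refine Prod.ext (funext hmask) (funext fun t => ?_)
  cases hpt : p.1 t
  · simpa [overwrite, hpt, ← hmask t] using congrFun hpq t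
  · exact hv t (by simp [overwrite, hpt])

variable [Fintype T] [DecidableEq T] [Fintype B] [MeasurableSpace B]

theorem card_overwrite_fiber_le {μ : Measure ((T → Bool) × (T → B))} {v : B}
    (hv : ∀ᵐ p ∂μ, ∀ t, p.2 t ≠ v) (z : T → B) :
    Finset.card {p | μ {p} ≠ 0 ∧ overwrite v p = z} ≤
      Fintype.card B ^ Finset.card {t | z t = v} := by
  rw [← Fintype.card_coe {t | z t = v}, ← Fintype.card_fun]
  refine Finset.card_le_card_of_injOn (fun p t => p.2 t) (fun _ _ => Finset.mem_univ _) ?_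
  intro p hp q hq heq
  simp only [Finset.coe_filter, Finset.mem_univ, true_and, Set.mem_ofPred_eq] at hp hq
  refine eq_of_overwrite_eq (ae_iff_of_countable.1 hv p hp.1) (ae_iff_of_countable.1 hv q hq.1)
    (hp.2.trans hq.2.symm) fun t ht => ?_
  exact congrFun heq ⟨t, by simpa [← hp.2] using ht⟩

theorem shannonEntropy_add_le_map_overwrite [MeasurableSingletonClass B]
    (κ : Measure (T → Bool)) [IsProbabilityMeasure κ] (ν : Measure (T → B))
    [IsProbabilityMeasure ν] {v : B} (hv : ∀ᵐ y ∂ν, ∀ t, y t ≠ v) :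
    shannonEntropy κ + shannonEntropy ν ≤ shannonEntropy ((κ.prod ν).map (overwrite v)) +
      (∑ t, κ.real {ξ | ξ t}) * Real.log (Fintype.card B) := by
  have havoid : ∀ᵐ p ∂κ.prod ν, ∀ t, p.2 t ≠ v := Measure.quasiMeasurePreserving_snd.ae hv
  have hcount : ∀ᵐ p ∂κ.prod ν,
      Real.log (Fintype.card B ^ Finset.card {t | overwrite v p t = v} : ℕ) =
        (∑ t, Set.indicator {ξ : T → Bool | ξ t} (fun _ => (1 : ℝ)) p.1) *
          Real.log (Fintype.card B) := by
    filter_upwards [havoid] with p hp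
    simp [overwrite_apply_eq_iff (hp _), Set.indicator_apply]
  have hmarg : ∀ t, ∫ p, Set.indicator {ξ : T → Bool | ξ t} (fun _ => (1 : ℝ)) p.1 ∂κ.prod ν
      = κ.real {ξ | ξ t} := fun t => by
    rw [integral_fun_fst, probReal_univ, one_smul,
      integral_indicator_const _ (Set.toFinite _).measurableSet, smul_eq_mul, mul_one]
  calc shannonEntropy κ + shannonEntropy ν
      = shannonEntropy (κ.prod ν) := (shannonEntropy_prod κ ν).symm
    _ ≤ shannonEntropy ((κ.prod ν).map (overwrite v)) + ∫ p, Real.log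
          (Fintype.card B ^ Finset.card {t | overwrite v p t = v} : ℕ) ∂κ.prod ν :=
        shannonEntropy_le_map_add_integral_log_card _ _ fun z => by
          convert card_overwrite_fiber_le havoid z
    _ = _ := by
        rw [integral_congr_ae hcount, integral_mul_const,
          integral_finsetSum _ fun _ _ => .of_finite]
        simp only [hmarg]

end Replacement

section AverageMeasure

variable {ι Ω : Type*} [Fintype ι] [MeasurableSpace Ω]

/-- The uniform average of a finite family of measures. -/
noncomputable def averageMeasure (μ : ι → Measure Ω) : Measure Ω :=
  (Fintype.card ι : ℝ≥0∞)⁻¹ • ∑ i, μ i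

instance isProbabilityMeasure_averageMeasure [Nonempty ι] (μ : ι → Measure Ω)
    [∀ i, IsProbabilityMeasure (μ i)] : IsProbabilityMeasure (averageMeasure μ) :=
  ⟨by simp [averageMeasure, ENNReal.inv_mul_cancel, ENNReal.natCast_ne_top]⟩

theorem averageMeasure_comp_equiv (μ : ι → Measure Ω) (e : ι ≃ ι) :
    averageMeasure (fun i => μ (e i)) = averageMeasure μ := by
  rw [averageMeasure, averageMeasure, Equiv.sum_comp e μ]

theorem map_averageMeasure {Ω' : Type*} [MeasurableSpace Ω'] (μ : ι → Measure Ω) {f : Ω → Ω'}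
    (hf : Measurable f) : (averageMeasure μ).map f = averageMeasure fun i => (μ i).map f := by
  rw [averageMeasure, averageMeasure, Measure.map_smul, Measure.map_finset_sum hf.aemeasurable]

theorem absolutelyContinuous_averageMeasure (μ : ι → Measure Ω) (i : ι) :
    μ i ≪ averageMeasure μ := by
  refine .smul_right ?_ (ENNReal.inv_ne_zero.2 (ENNReal.natCast_ne_top _))
  exact Measure.absolutelyContinuous_of_le
    (Finset.single_le_sum (fun _ _ => Measure.zero_le _) (Finset.mem_univ i))

theorem le_integral_averageMeasure [Nonempty ι] (μ : ι → Measure Ω) {f : Ω → ℝ} {c : ℝ}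
    (hf : ∀ i, Integrable f (μ i)) (hc : ∀ i, c ≤ ∫ ω, f ω ∂μ i) :
    c ≤ ∫ ω, f ω ∂averageMeasure μ := by
  have hcard : (0 : ℝ) < Fintype.card ι := Nat.cast_pos.2 Fintype.card_pos
  rw [averageMeasure, integral_smul_measure, integral_finsetSum_measure fun i _ => hf i,
    ENNReal.toReal_inv, ENNReal.toReal_natCast, smul_eq_mul, le_inv_mul_iff₀ hcard,
    ← nsmul_eq_mul]
  exact Finset.card_nsmul_le_sum _ _ _ fun i _ => hc i

theorem le_shannonEntropy_averageMeasure {S : Type*} [Fintype S] [MeasurableSpace S]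
    [MeasurableSingletonClass S] [Nonempty ι] (μ : ι → Measure S)
    [∀ i, IsProbabilityMeasure (μ i)] {c : ℝ} (hc : ∀ i, c ≤ shannonEntropy (μ i)) :
    c ≤ shannonEntropy (averageMeasure μ) := by
  rw [shannonEntropy_eq_integral]
  refine le_integral_averageMeasure μ (fun _ => .of_finite) fun i => (hc i).trans ?_
  exact shannonEntropy_le_integral_neg_log (μ i) (fun _ => measureReal_nonneg)
    ((absolutelyContinuous_averageMeasure μ i).ae_le (ae_measureReal_singleton_pos _)) (by simp)

end AverageMeasure

section Windows

variable {d : ℕ} {A : Type} {n M k : ℕ}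

/-- The point of `ℤ^d` with the coordinates of `m`, which identifies `Fin d → Fin n` with
`E_n`. -/
def site (m : Fin d → Fin n) : Fin d → ℤ := fun i => ((m i : ℕ) : ℤ)

/-- The restriction of a configuration to `E_n`. -/
def window (n : ℕ) (x : Cfg d A) : (Fin d → Fin n) → A := fun m => x (site m)

/-- The restriction of a configuration to `E_{Mk}`, read as an array of `M^d` patterns on `E_k`. -/
def blocks (M k : ℕ) (x : Cfg d A) (t : Fin d → Fin M) : (Fin d → Fin k) → A :=
  window k (shift ((k : ℤ) • site t) x)

theorem shift_shift (a b : Fin d → ℤ) (x : Cfg d A) : shift a (shift b x) = shift (a + b) x := by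
  funext m
  simp only [shift, ← add_assoc, add_comm b a]

theorem blocks_eq_window (x : Cfg d A) (t : Fin d → Fin M) (r : Fin d → Fin k) :
    blocks M k x t r = window (M * k) x fun i => finProdFinEquiv (t i, r i) := by
  simp only [blocks, window, shift]
  congr 1
  funext i
  simp [site, add_comm]

theorem cylE_eq_preimage_window (w : (Fin d → Fin n) → A) : cylE n w = window n ⁻¹' {w} := by
  ext x
  exact funext_iff.symm

variable [MeasurableSpace A]

theorem measurable_shift (a : Fin d → ℤ) : Measurable (shift a : Cfg d A → Cfg d A) :=
  measurable_pi_lambda _ fun _ => measurable_pi_apply _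

theorem measurable_window : Measurable (window n : Cfg d A → _) :=
  measurable_pi_lambda _ fun _ => measurable_pi_apply _

theorem measurable_blocks : Measurable (blocks M k : Cfg d A → _) :=
  measurable_pi_lambda _ fun _ => measurable_window.comp (measurable_shift _)

theorem map_shift_map_shift (μ : Measure (Cfg d A)) (a b : Fin d → ℤ) :
    (μ.map (shift b)).map (shift a) = μ.map (shift (a + b)) := by
  rw [Measure.map_map (measurable_shift a) (measurable_shift b)]
  exact congrArg (μ.map ·) (funext (shift_shift a b))

end Windows

section BlockEntropy

variable {d : ℕ} {A : Type} [Fintype A] [MeasurableSpace A]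

/-- The Shannon entropy of the restriction to `E_n` of a `μ`-random configuration. -/
noncomputable def blockEntropy (μ : Measure (Cfg d A)) (n : ℕ) : ℝ :=
  shannonEntropy (μ.map (window n))

theorem blockEntropy_nonneg (μ : Measure (Cfg d A)) [IsProbabilityMeasure μ] (n : ℕ) :
    0 ≤ blockEntropy μ n :=
  have := Measure.isProbabilityMeasure_map (μ := μ) (measurable_window (n := n)).aemeasurable
  shannonEntropy_nonneg _

variable [MeasurableSingletonClass A] (μ : Measure (Cfg d A))

theorem entropy_eq_iInf_blockEntropy :
    entropy μ = ⨅ n : {n : ℕ // 1 ≤ n}, ((n.1 : ℝ) ^ d)⁻¹ * blockEntropy μ n.1 := by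
  simp only [entropy, blockEntropy, shannonEntropy, cylE_eq_preimage_window, ← measureReal_def,
    map_measureReal_apply measurable_window (measurableSet_singleton _)]

theorem le_entropy_of_pow_mul_le_blockEntropy {c : ℝ}
    (hc : ∀ n : ℕ, 1 ≤ n → (n : ℝ) ^ d * c ≤ blockEntropy μ n) : c ≤ entropy μ := by
  have : Nonempty {n : ℕ // 1 ≤ n} := ⟨1, le_rfl⟩
  rw [entropy_eq_iInf_blockEntropy]
  refine le_ciInf fun n => ?_
  rw [le_inv_mul_iff₀ (pow_pos (Nat.cast_pos.2 n.2) d)]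
  exact hc n.1 n.2

theorem blockEntropy_map_shift_le [IsFiniteMeasure μ] {a : Fin d → ℤ} {n N : ℕ}
    (ha : ∀ i, 0 ≤ a i) (haN : ∀ i, a i + n ≤ N) :
    blockEntropy (μ.map (shift a)) n ≤ blockEntropy μ N := by
  let crop : ((Fin d → Fin N) → A) → (Fin d → Fin n) → A := fun z m =>
    z fun i => ⟨(a i + m i).toNat, by have := ha i; have := haN i; have := (m i).2; omega⟩
  have hcrop : window n ∘ shift a = crop ∘ window N := by
    funext x m
    refine congrArg x (funext fun i => ?_)
    have := ha i
    simp only [site, Pi.add_apply]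
    omega
  rw [blockEntropy, Measure.map_map measurable_window (measurable_shift a), hcrop,
    ← Measure.map_map .of_discrete measurable_window]
  exact shannonEntropy_map_le _ crop

variable [IsProbabilityMeasure μ]

theorem pow_mul_entropy_le_blockEntropy {n : ℕ} (hn : 1 ≤ n) :
    (n : ℝ) ^ d * entropy μ ≤ blockEntropy μ n := by
  have hnd : (0 : ℝ) < (n : ℝ) ^ d := pow_pos (Nat.cast_pos.2 hn) d
  rw [← le_inv_mul_iff₀ hnd, entropy_eq_iInf_blockEntropy]
  refine ciInf_le (f := fun n : {n : ℕ // 1 ≤ n} => ((n.1 : ℝ) ^ d)⁻¹ * blockEntropy μ n.1)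
    ⟨0, ?_⟩ ⟨n, hn⟩
  rintro _ ⟨n, rfl⟩
  exact mul_nonneg (by positivity) (blockEntropy_nonneg μ n.1)

theorem entropy_le_log_card : entropy μ ≤ Real.log (Fintype.card A) := by
  have := Measure.isProbabilityMeasure_map (μ := μ) (measurable_window (n := 1)).aemeasurable
  have h := (pow_mul_entropy_le_blockEntropy μ le_rfl).trans (shannonEntropy_le_log_card _)
  simpa using h

theorem blockEntropy_mul (M k : ℕ) :
    blockEntropy μ (M * k) = shannonEntropy (μ.map (blocks M k)) := by
  let regroup : ((Fin d → Fin (M * k)) → A) → (Fin d → Fin M) → (Fin d → Fin k) → A :=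
    fun z t r => z fun i => finProdFinEquiv (t i, r i)
  have hinj : Function.Injective regroup := fun z z' h => funext fun m => by
    simpa only [regroup, Prod.mk.eta, Equiv.apply_symm_apply] using
      congrFun₂ h (fun i => (finProdFinEquiv.symm (m i)).1)
        fun i => (finProdFinEquiv.symm (m i)).2
  have hblocks : blocks M k = regroup ∘ window (M * k) :=
    funext fun x => funext₂ (blocks_eq_window x)
  rw [hblocks, ← Measure.map_map .of_discrete measurable_window,
    shannonEntropy_map_of_injective _ hinj, blockEntropy]

theorem blockEntropy_mul_le (hμ : Invariant μ) (M k : ℕ) :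
    blockEntropy μ (M * k) ≤ (M : ℝ) ^ d * blockEntropy μ k := by
  have := Measure.isProbabilityMeasure_map (μ := μ)
    (measurable_blocks (M := M) (k := k)).aemeasurable
  rw [blockEntropy_mul]
  refine (shannonEntropy_le_sum_map_eval _).trans_eq ?_
  have hblock : ∀ t, (μ.map (blocks M k)).map (Function.eval t) = μ.map (window k) := fun t => by
    conv_rhs => rw [← hμ ((k : ℤ) • site t), Measure.map_map measurable_window (measurable_shift _)]
    exact Measure.map_map (measurable_pi_apply t) measurable_blocks
  simp [hblock, blockEntropy]

theorem div_pow_le_entropy (hμ : Invariant μ) {k : ℕ} (hk : 0 < k) {c : ℝ}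
    (hc : ∀ M : ℕ, 1 ≤ M → (M : ℝ) ^ d * c ≤ blockEntropy μ ((M + 1) * k)) :
    c / (k : ℝ) ^ d ≤ entropy μ := by
  refine le_entropy_of_pow_mul_le_blockEntropy μ fun n hn => ?_
  have : (n : ℝ) ≠ 0 := by positivity
  have hlim : Tendsto (fun l : ℕ => ((n : ℝ) - 1 / (l + 1)) ^ d * (c / (k : ℝ) ^ d)) atTop
      (𝓝 ((n : ℝ) ^ d * (c / (k : ℝ) ^ d))) := by
    simpa using ((tendsto_one_div_add_atTop_nhds_zero_nat.const_sub (n : ℝ)).pow d).mul_const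
      (c / (k : ℝ) ^ d)
  refine le_of_tendsto hlim ((eventually_ge_atTop 1).mono fun l hl => ?_)
  have hln : 2 ≤ (l + 1) * n := Nat.mul_le_mul (Nat.succ_le_succ hl) hn
  have hpos : (0 : ℝ) < (((l + 1) * k : ℕ) : ℝ) ^ d := by positivity
  refine le_of_mul_le_mul_left ?_ hpos
  calc (((l + 1) * k : ℕ) : ℝ) ^ d * (((n : ℝ) - 1 / (l + 1)) ^ d * (c / (k : ℝ) ^ d))
      = (((l + 1) * n - 1 : ℕ) : ℝ) ^ d * c := by
        rw [Nat.cast_sub (one_le_two.trans hln)]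
        push_cast
        rw [show ((l : ℝ) + 1) * n - 1 = (l + 1) * (n - 1 / (l + 1)) by field_simp, mul_pow,
          mul_pow]
        field_simp
    _ ≤ blockEntropy μ (((l + 1) * k) * n) := by
        convert hc ((l + 1) * n - 1) (Nat.le_sub_one_of_lt hln) using 2
        rw [Nat.sub_add_cancel (one_le_two.trans hln)]
        ring
    _ ≤ (((l + 1) * k : ℕ) : ℝ) ^ d * blockEntropy μ n := blockEntropy_mul_le μ hμ _ _

end BlockEntropy

theorem entropy_add_integral_le_pressure {d : ℕ} {A : Type} [Fintype A] [MeasurableSpace A]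
    [MeasurableSingletonClass A] {φ : Cfg d A → ℝ} {D : ℝ} (hD : ∀ x, |φ x| ≤ D) (β : ℝ)
    {ν : Measure (Cfg d A)} [IsProbabilityMeasure ν] (hν : Invariant ν) :
    entropy ν + β * ∫ x, φ x ∂ν ≤ pressure φ β := by
  refine le_csSup ⟨Real.log (Fintype.card A) + |β| * D, ?_⟩ ⟨ν, inferInstance, hν, rfl⟩
  rintro _ ⟨η, hη, -, rfl⟩
  have hint : |∫ x, φ x ∂η| ≤ D := by
    simpa using norm_integral_le_of_norm_le_const (μ := η) (f := φ) (.of_forall hD)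
  have hβ : β * ∫ x, φ x ∂η ≤ |β| * D := by
    calc β * ∫ x, φ x ∂η ≤ |β * ∫ x, φ x ∂η| := le_abs_self _
      _ = |β| * |∫ x, φ x ∂η| := abs_mul _ _
      _ ≤ |β| * D := by gcongr
  exact add_le_add (entropy_le_log_card η) hβ

section ShiftAverage

variable {d : ℕ} {A : Type} [MeasurableSpace A] {k : ℕ}

/-- Invariance under the sublattice `kℤ^d`. -/
def PeriodicInvariant (k : ℕ) (μ : Measure (Cfg d A)) : Prop :=
  ∀ n : Fin d → ℤ, μ.map (shift ((k : ℤ) • n)) = μ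

/-- The average of the translates of `μ` over `ℤ^d / kℤ^d`, each class being represented by its
element of `E_k`. It makes a `kℤ^d`-invariant measure `ℤ^d`-invariant. -/
noncomputable def shiftAverage (k : ℕ) [NeZero k] (μ : Measure (Cfg d A)) : Measure (Cfg d A) :=
  averageMeasure fun τ : Fin d → ZMod k => μ.map (shift fun i => ((τ i).val : ℤ))

theorem PeriodicInvariant.map_shift_congr {μ : Measure (Cfg d A)} (hμ : PeriodicInvariant k μ)
    {a b : Fin d → ℤ} (hab : ∀ i, (a i : ZMod k) = b i) : μ.map (shift a) = μ.map (shift b) := by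
  choose n hn using fun i => (ZMod.intCast_eq_intCast_iff_dvd_sub _ _ k).1 (hab i)
  have hb : b = a + (k : ℤ) • n := funext fun i => by
    simp only [Pi.add_apply, Pi.smul_apply, smul_eq_mul, ← hn i, add_sub_cancel]
  rw [hb, ← map_shift_map_shift, hμ n]

variable [NeZero k]

instance isProbabilityMeasure_shiftAverage (μ : Measure (Cfg d A)) [IsProbabilityMeasure μ] :
    IsProbabilityMeasure (shiftAverage k μ) :=
  have := fun τ : Fin d → ZMod k => Measure.isProbabilityMeasure_map (μ := μ)
    (measurable_shift fun i => ((τ i).val : ℤ)).aemeasurable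
  isProbabilityMeasure_averageMeasure _

theorem PeriodicInvariant.invariant_shiftAverage {μ : Measure (Cfg d A)}
    (hμ : PeriodicInvariant k μ) : Invariant (shiftAverage k μ) := by
  intro n
  rw [shiftAverage, map_averageMeasure _ (measurable_shift n)]
  refine Eq.trans ?_ (averageMeasure_comp_equiv _ (Equiv.addLeft fun i => (n i : ZMod k)))
  congr 1
  funext τ
  rw [map_shift_map_shift]
  exact hμ.map_shift_congr fun i => by simp

theorem PeriodicInvariant.blockEntropy_le_shiftAverage [Fintype A] [MeasurableSingletonClass A]
    {μ : Measure (Cfg d A)} [IsProbabilityMeasure μ] (hμ : PeriodicInvariant k μ) (M : ℕ) :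
    blockEntropy μ (M * k) ≤ blockEntropy (shiftAverage k μ) ((M + 1) * k) := by
  have hprob := fun τ : Fin d → ZMod k => Measure.isProbabilityMeasure_map (μ := μ)
    (measurable_shift fun i => ((τ i).val : ℤ)).aemeasurable
  have hwindow := fun τ : Fin d → ZMod k => Measure.isProbabilityMeasure_map
    (μ := μ.map (shift fun i => ((τ i).val : ℤ)))
    (measurable_window (n := (M + 1) * k)).aemeasurable
  rw [blockEntropy, blockEntropy, shiftAverage, map_averageMeasure _ measurable_window]
  refine le_shannonEntropy_averageMeasure _ fun τ => ?_
  have hτ : ∀ i, ((τ i).val : ℤ) ≤ k := fun i => mod_cast (τ i).val_lt.le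
  have hback : (μ.map (shift fun i => ((τ i).val : ℤ))).map (shift fun i => k - (τ i).val) = μ := by
    conv_rhs => rw [← hμ 1]
    rw [map_shift_map_shift]
    congr 2
    funext i
    simp
  conv_lhs => rw [← hback]
  refine blockEntropy_map_shift_le _ (fun i => sub_nonneg.2 (hτ i)) fun i => ?_
  push_cast
  linarith [(τ i).val.cast_nonneg (α := ℤ)]

theorem PeriodicInvariant.div_pow_le_entropy_shiftAverage [Fintype A] [MeasurableSingletonClass A]
    {μ : Measure (Cfg d A)} [IsProbabilityMeasure μ] (hμ : PeriodicInvariant k μ) {c : ℝ}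
    (hc : ∀ M : ℕ, 1 ≤ M → (M : ℝ) ^ d * c ≤ blockEntropy μ (M * k)) :
    c / (k : ℝ) ^ d ≤ entropy (shiftAverage k μ) :=
  div_pow_le_entropy _ hμ.invariant_shiftAverage (NeZero.pos k) fun M hM =>
    (hc M hM).trans (hμ.blockEntropy_le_shiftAverage M)

theorem le_integral_shiftAverage {μ : Measure (Cfg d A)} {φ : Cfg d A → ℝ} {c : ℝ}
    (hφ : ∀ a, Integrable (fun x => φ (shift a x)) μ) (hφm : Measurable φ)
    (hc : ∀ r : Fin d → ℤ, (∀ i, 0 ≤ r i ∧ r i < k) → c ≤ ∫ x, φ (shift r x) ∂μ) :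
    c ≤ ∫ x, φ x ∂shiftAverage k μ := by
  refine le_integral_averageMeasure _ (fun τ => ?_) fun τ => ?_
  · exact (integrable_map_measure hφm.aestronglyMeasurable (measurable_shift _).aemeasurable).2
      (hφ _)
  · rw [integral_map (measurable_shift _).aemeasurable hφm.aestronglyMeasurable]
    exact hc _ fun i => ⟨Int.natCast_nonneg _, mod_cast (τ i).val_lt⟩

end ShiftAverage

section InsertTiles

variable {d : ℕ} {A : Type} {k M : ℕ} {u : Cfg d A}

/-- Tile `ℤ^d` by the translates `kn + E_k` and write the pattern `u|_{E_k}` into every tile with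
`ξ n = true`. -/
def insertTiles (k : ℕ) (u : Cfg d A) (ξ : Cfg d Bool) (x : Cfg d A) : Cfg d A :=
  fun m => bif ξ fun i => m i / k then u fun i => m i % k else x m

theorem shift_insertTiles (hk : k ≠ 0) (n : Fin d → ℤ) (ξ : Cfg d Bool) (x : Cfg d A) :
    shift ((k : ℤ) • n) (insertTiles k u ξ x) =
      insertTiles k u (shift n ξ) (shift ((k : ℤ) • n) x) := by
  have hk' : (k : ℤ) ≠ 0 := mod_cast hk
  funext m
  simp only [shift, insertTiles, Pi.add_def, Pi.smul_apply, smul_eq_mul,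
    Int.add_ediv_of_dvd_left (dvd_mul_right _ _), Int.mul_ediv_cancel_left _ hk',
    Int.mul_add_emod_self_left]

theorem blocks_insertTiles (ξ : Cfg d Bool) (x : Cfg d A) :
    blocks M k (insertTiles k u ξ x) = overwrite (window k u) (window M ξ, blocks M k x) := by
  funext t r
  have hdiv : ∀ i, ((k : ℤ) * (t i : ℕ) + (r i : ℕ)) / k = (t i : ℕ) := fun i => by
    rw [Int.mul_add_ediv_left _ _ (by have := (r i).2; omega),
      Int.ediv_eq_zero_of_lt (by positivity) (mod_cast (r i).2), add_zero]
  have hmod : ∀ i, ((k : ℤ) * (t i : ℕ) + (r i : ℕ)) % k = (r i : ℕ) := fun i => by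
    rw [Int.mul_add_emod_self_left, Int.emod_eq_of_lt (by positivity) (mod_cast (r i).2)]
  have hsite : (ξ fun i => ((t i : ℕ) : ℤ)) = ξ (site t) := rfl
  simp only [blocks, window, shift, insertTiles, overwrite, Pi.add_apply, Pi.smul_apply, site,
    smul_eq_mul, hdiv, hmod, hsite]
  cases ξ (site t) <;> rfl

variable [MeasurableSpace A]

theorem measurable_insertTiles :
    Measurable fun p : Cfg d Bool × Cfg d A => insertTiles k u p.1 p.2 := by
  refine measurable_pi_lambda _ fun m => ?_
  simp only [insertTiles, Bool.cond_eq_ite]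
  exact .ite (measurableSet_eq_fun (by fun_prop) measurable_const) measurable_const (by fun_prop)

/-- The law of `insertTiles k u ξ x` for independent `ξ ∼ β` and `x ∼ μ`. -/
noncomputable def insertTilesMeasure (k : ℕ) (u : Cfg d A) (β : Measure (Cfg d Bool))
    (μ : Measure (Cfg d A)) : Measure (Cfg d A) :=
  (β.prod μ).map fun p => insertTiles k u p.1 p.2

variable {β : Measure (Cfg d Bool)} {μ : Measure (Cfg d A)}

theorem ae_blocks_ne (hμ : Invariant μ) {v : (Fin d → Fin k) → A} (hv : μ (cylE k v) = 0) :
    ∀ᵐ x ∂μ, ∀ t, blocks M k x t ≠ v := by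
  refine ae_all_iff.2 fun t => ?_
  rw [← hμ ((k : ℤ) • site t)] at hv
  refine (ae_of_ae_map (measurable_shift _).aemeasurable (measure_eq_zero_iff_ae_notMem.1 hv)).mono
    fun x hx => ?_
  rwa [cylE_eq_preimage_window] at hx

theorem measure_apply_eq_true (hβ : Invariant β) (n : Fin d → ℤ) :
    β {ξ | ξ n} = β {ξ | ξ 0} := by
  conv_rhs => rw [← hβ n, Measure.map_apply (measurable_shift n)
    (measurableSet_eq_fun (measurable_pi_apply 0) measurable_const)]
  simp [shift]

variable [IsProbabilityMeasure β] [IsProbabilityMeasure μ]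

instance isProbabilityMeasure_insertTilesMeasure :
    IsProbabilityMeasure (insertTilesMeasure k u β μ) :=
  Measure.isProbabilityMeasure_map measurable_insertTiles.aemeasurable

theorem periodicInvariant_insertTilesMeasure (hk : k ≠ 0) (hβ : Invariant β) (hμ : Invariant μ) :
    PeriodicInvariant k (insertTilesMeasure k u β μ) := by
  intro n
  conv_rhs => rw [insertTilesMeasure, ← hβ n, ← hμ ((k : ℤ) • n),
    Measure.map_prod_map _ _ (measurable_shift _) (measurable_shift _),
    Measure.map_map measurable_insertTiles
      ((measurable_shift n).prodMap (measurable_shift _))]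
  rw [insertTilesMeasure, Measure.map_map (measurable_shift _) measurable_insertTiles]
  exact congrArg (Measure.map · _) (funext fun p => shift_insertTiles hk n p.1 p.2)

theorem map_blocks_insertTilesMeasure [Finite A] [MeasurableSingletonClass A] :
    (insertTilesMeasure k u β μ).map (blocks M k) =
      ((β.map (window M)).prod (μ.map (blocks M k))).map (overwrite (window k u)) := by
  rw [insertTilesMeasure, Measure.map_map measurable_blocks measurable_insertTiles,
    Measure.map_prod_map _ _ measurable_window measurable_blocks,
    Measure.map_map .of_discrete (measurable_window.prodMap measurable_blocks)]
  exact congrArg (Measure.map · _) (funext fun p => blocks_insertTiles p.1 p.2)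

theorem blockEntropy_add_le_insertTilesMeasure [Fintype A] [MeasurableSingletonClass A]
    (hβ : Invariant β) (hμ : Invariant μ) (hu : μ (cylE k (window k u)) = 0) (M : ℕ) :
    blockEntropy β M + blockEntropy μ (M * k) ≤ blockEntropy (insertTilesMeasure k u β μ) (M * k) +
      (M : ℝ) ^ d * β.real {ξ | ξ 0} * ((k : ℝ) ^ d * Real.log (Fintype.card A)) := by
  have := Measure.isProbabilityMeasure_map (μ := β) (measurable_window (n := M)).aemeasurable
  have := Measure.isProbabilityMeasure_map (μ := μ)
    (measurable_blocks (M := M) (k := k)).aemeasurable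
  have havoid : ∀ᵐ y ∂μ.map (blocks M k), ∀ t, y t ≠ window k u :=
    (ae_map_iff measurable_blocks.aemeasurable (Set.toFinite _).measurableSet).2
      (ae_blocks_ne hμ hu)
  have hdensity : ∑ t, (β.map (window M)).real {ξ | ξ t} = (M : ℝ) ^ d * β.real {ξ | ξ 0} := by
    simp [map_measureReal_apply measurable_window (Set.toFinite _).measurableSet, window,
      measureReal_def, measure_apply_eq_true hβ]
  rw [blockEntropy_mul, blockEntropy_mul, map_blocks_insertTilesMeasure, blockEntropy,
    ← hdensity]
  convert shannonEntropy_add_le_map_overwrite (β.map (window M)) _ havoid using 3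
  simp

theorem entropy_add_le_shiftAverage_insertTilesMeasure [Fintype A] [MeasurableSingletonClass A]
    [NeZero k] (hβ : Invariant β) (hμ : Invariant μ) (hu : μ (cylE k (window k u)) = 0) :
    entropy μ + entropy β / (k : ℝ) ^ d ≤
      entropy (shiftAverage k (insertTilesMeasure k u β μ)) +
        β.real {ξ | ξ 0} * Real.log (Fintype.card A) := by
  have hk : (0 : ℝ) < (k : ℝ) ^ d := pow_pos (Nat.cast_pos.2 (NeZero.pos k)) d
  have hgain := (periodicInvariant_insertTilesMeasure (u := u) (NeZero.ne k) hβ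
    hμ).div_pow_le_entropy_shiftAverage (c := (k : ℝ) ^ d * entropy μ + entropy β -
      β.real {ξ | ξ 0} * ((k : ℝ) ^ d * Real.log (Fintype.card A))) fun M hM => by
    have hins := blockEntropy_add_le_insertTilesMeasure hβ hμ hu M
    have hβM := pow_mul_entropy_le_blockEntropy β hM
    have hμM := pow_mul_entropy_le_blockEntropy μ (Nat.mul_pos hM (NeZero.pos k))
    push_cast [mul_pow] at hμM
    linarith
  rw [div_le_iff₀ hk] at hgain
  rw [← sub_le_iff_le_add]
  refine le_of_mul_le_mul_right ?_ hk
  field_simp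
  linarith

end InsertTiles

section BernoulliField

theorem map_comp_infinitePi {ι κ S : Type*} [MeasurableSpace S] (ν : Measure S)
    [IsProbabilityMeasure ν] {f : ι → κ} (hf : f.Injective) :
    (Measure.infinitePi fun _ : κ => ν).map (fun x i => x (f i)) =
      Measure.infinitePi fun _ : ι => ν := by
  refine Measure.eq_infinitePi _ fun s t ht => ?_
  have hpre : (fun (x : κ → S) i => x (f i)) ⁻¹' (s : Set ι).pi t =
      (s.map ⟨f, hf⟩ : Set κ).pi (Function.extend f t fun _ => Set.univ) := by
    ext x
    simp [Set.mem_pi, hf.extend_apply]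
  rw [Measure.map_apply (by fun_prop) (.pi s.countable_toSet fun i _ => ht i), hpre,
    Measure.infinitePi_pi]
  · simp [hf.extend_apply]
  · simpa [hf.extend_apply] using fun i _ => ht i

theorem shannonEntropy_bernoulliMeasure (p : unitInterval) :
    shannonEntropy (ProbabilityTheory.bernoulliMeasure true false p) = Real.binEntropy p := by
  rw [shannonEntropy, Fintype.sum_bool,
    ProbabilityTheory.bernoulliMeasure_real_apply_of_mem_of_notMem _ (.singleton _)
      (Set.mem_singleton _) (by simp),
    ProbabilityTheory.bernoulliMeasure_real_apply_of_notMem_of_mem _ (.singleton _) (by simp)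
      (Set.mem_singleton _),
    Real.binEntropy_eq_negMulLog_add_negMulLog_one_sub]

/-- The law of a field of independent `ν`-distributed symbols. -/
noncomputable def iidField (d : ℕ) {A : Type} [MeasurableSpace A] (ν : Measure A) :
    Measure (Cfg d A) :=
  Measure.infinitePi fun _ => ν

variable {d : ℕ} {A : Type} [MeasurableSpace A] (ν : Measure A) [IsProbabilityMeasure ν]

instance isProbabilityMeasure_iidField : IsProbabilityMeasure (iidField d ν) :=
  inferInstanceAs (IsProbabilityMeasure (Measure.infinitePi _))

theorem invariant_iidField : Invariant (iidField d ν) := fun n =>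
  map_comp_infinitePi ν (add_right_injective n)

theorem shannonEntropy_le_entropy_iidField [Fintype A] [MeasurableSingletonClass A] :
    shannonEntropy ν ≤ entropy (iidField d ν) := by
  refine le_entropy_of_pow_mul_le_blockEntropy _ fun n _ => le_of_eq ?_
  have hsite : (site : (Fin d → Fin n) → Fin d → ℤ).Injective := fun a b hab =>
    funext fun i => Fin.ext (Nat.cast_injective (congrFun hab i))
  have hlaw : (iidField d ν).map (window n) = Measure.pi fun _ => ν :=
    (map_comp_infinitePi ν hsite).trans (Measure.infinitePi_eq_pi _)
  simp [blockEntropy, hlaw, shannonEntropy_pi]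

theorem iidField_real_apply_mem (n : Fin d → ℤ) {s : Set A} (hs : MeasurableSet s) :
    (iidField d ν).real {x | x n ∈ s} = ν.real s := by
  conv_rhs => rw [← Measure.infinitePi_map_eval (fun _ : Fin d → ℤ => ν) n]
  exact (map_measureReal_apply (measurable_pi_apply n) hs).symm

end BernoulliField

section SupNorm

variable {d : ℕ}

theorem supNorm_le_iff_mem_Icc {m : Fin d → ℤ} {n : ℕ} :
    supNorm m ≤ n ↔ m ∈ Finset.Icc (-n : Fin d → ℤ) n := by
  simp only [supNorm, Finset.sup_le_iff, Finset.mem_univ, true_imp_iff, Finset.mem_Icc, Pi.le_def,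
    ← forall_and, Pi.neg_apply, Pi.natCast_apply]
  exact forall_congr' fun i => by omega

theorem mem_box_iff_supNorm_eq {m : Fin d → ℤ} {n : ℕ} : m ∈ Finset.box n ↔ supNorm m = n := by
  cases n with
  | zero => rw [← Nat.le_zero, supNorm_le_iff_mem_Icc]; simp
  | succ n =>
    rw [Finset.box_succ_eq_sdiff, Finset.mem_sdiff, ← supNorm_le_iff_mem_Icc,
      ← supNorm_le_iff_mem_Icc]
    omega

theorem card_box_succ_le (d n : ℕ) :
    (Finset.box (n + 1) : Finset (Fin d → ℤ)).card ≤ 2 * d * (2 * n + 3) ^ (d - 1) := by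
  have hsub : Finset.Icc (-n : Fin d → ℤ) n ⊆ Finset.Icc (-n.succ : Fin d → ℤ) n.succ :=
    fun m => by simpa only [← supNorm_le_iff_mem_Icc] using Nat.le_succ_of_le
  rw [Finset.box_succ_eq_sdiff, Finset.card_sdiff_of_subset hsub]
  simp only [Pi.card_Icc, Int.card_Icc, Pi.neg_apply, Pi.natCast_apply, Finset.prod_const,
    Finset.card_univ, Fintype.card_fin]
  grind [abs_pow_sub_pow_le (α := ℤ) (2 * n + 3) (2 * n + 1) d]

theorem tsum_comp_supNorm (f : ℕ → ℝ≥0∞) :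
    ∑' m : Fin d → ℤ, f (supNorm m) =
      ∑' n, (Finset.box n : Finset (Fin d → ℤ)).card * f n := by
  rw [← ENNReal.tsum_fiberwise _ supNorm]
  refine tsum_congr fun n => ?_
  have hbox : (supNorm ⁻¹' {n} : Set (Fin d → ℤ)) = (Finset.box n : Finset (Fin d → ℤ)) :=
    Set.ext fun m => mem_box_iff_supNorm_eq.symm
  have hfiber : ∀ m : (supNorm ⁻¹' {n} : Set (Fin d → ℤ)), f (supNorm m.1) = f n :=
    fun m => congrArg f m.2
  simp_rw [hfiber]
  rw [ENNReal.tsum_set_const, hbox, Set.encard_coe_eq_coe_finsetCard]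
  simp

theorem supNorm_ediv_le {k : ℕ} {r m : Fin d → ℤ} (hr : ∀ i, 0 ≤ r i ∧ r i < k) :
    (supNorm fun i => (r i + m i) / k) ≤ supNorm m := by
  refine Finset.sup_mono_fun fun i _ => ?_
  obtain ⟨h0, hk⟩ := hr i
  have hlow : -((m i).natAbs : ℤ) ≤ (r i + m i) / k :=
    (Int.le_ediv_iff_mul_le (by omega)).2 (by nlinarith [neg_abs_le (m i), (m i).natCast_natAbs])
  have hupp : (r i + m i) / k < (m i).natAbs + 1 :=
    (Int.ediv_lt_iff_lt_mul (by omega)).2 (by nlinarith [le_abs_self (m i), (m i).natCast_natAbs])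
  change ((r i + m i) / k).natAbs ≤ (m i).natAbs
  omega

end SupNorm

section Oscillation

variable {d : ℕ} {A : Type} {E : Type*} [PseudoEMetricSpace E]

/-- The oscillation of `φ` over pairs of configurations agreeing on the open ball of radius `n`;
the inequality `supNorm m < n` is strict, so that `oscillation φ (n + 1)` corresponds to `var_n φ`
and `oscillation φ 0` is the diameter of the range of `φ`. -/
noncomputable def oscillation (φ : Cfg d A → E) (n : ℕ) : ℝ≥0∞ :=
  ⨆ (x) (y) (_ : ∀ m, supNorm m < n → x m = y m), edist (φ x) (φ y)

theorem edist_le_oscillation (φ : Cfg d A → E) {n : ℕ} {x y : Cfg d A}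
    (h : ∀ m, supNorm m < n → x m = y m) : edist (φ x) (φ y) ≤ oscillation φ n :=
  le_iSup₂_of_le x y (le_iSup_of_le h le_rfl)

theorem oscillation_ne_top {φ : Cfg d A → ℝ} {D : ℝ} (hD : ∀ x, |φ x| ≤ D) (n : ℕ) :
    oscillation φ n ≠ ∞ := by
  refine ne_top_of_le_ne_top (ENNReal.ofReal_ne_top (r := D + D))
    (iSup₂_le fun x y => iSup_le fun _ => ?_)
  rw [edist_dist]
  exact ENNReal.ofReal_le_ofReal
    ((dist_le_norm_add_norm _ _).trans (add_le_add (hD x) (hD y)))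

theorem oscillation_succ_le {φ : Cfg d A → ℝ} {D : ℝ} (hD : ∀ x, |φ x| ≤ D) (n : ℕ) :
    oscillation φ (n + 1) ≤ ENNReal.ofReal (varPot φ n) := by
  refine iSup₂_le fun x y => iSup_le fun h => ?_
  rw [edist_dist, Real.dist_eq]
  refine ENNReal.ofReal_le_ofReal (le_csSup ⟨D + D, ?_⟩ ⟨x, y, fun m hm => h m ?_, rfl⟩)
  · rintro _ ⟨x, y, _, rfl⟩
    exact (abs_sub _ _).trans (add_le_add (hD x) (hD y))
  · rw [Nat.lt_succ_iff, supNorm_le_iff_mem_Icc, Finset.mem_Icc]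
    exact ⟨fun i => (abs_le.1 (hm i)).1, fun i => (abs_le.1 (hm i)).2⟩

theorem tsum_oscillation_supNorm_ne_top {φ : Cfg d A → ℝ} {D : ℝ} (hD : ∀ x, |φ x| ≤ D)
    (hsum : Summable fun n : ℕ => ((n + 1 : ℕ) : ℝ) ^ (d - 1) * varPot φ (n + 1)) :
    ∑' m : Fin d → ℤ, oscillation φ (supNorm m) ≠ ∞ := by
  have hterm : ∀ n : ℕ,
      ((Finset.box (n + 2) : Finset (Fin d → ℤ)).card : ℝ≥0∞) * oscillation φ (n + 2) ≤
        ENNReal.ofReal (2 * d * 5 ^ (d - 1) *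
          (((n + 1 : ℕ) : ℝ) ^ (d - 1) * varPot φ (n + 1))) := fun n => by
    have hcard : (Finset.box (n + 2) : Finset (Fin d → ℤ)).card ≤
        2 * d * 5 ^ (d - 1) * (n + 1) ^ (d - 1) := by
      refine (card_box_succ_le d (n + 1)).trans ?_
      rw [mul_assoc _ (5 ^ _), ← mul_pow]
      gcongr
      omega
    rw [← mul_assoc, ENNReal.ofReal_mul (by positivity)]
    refine mul_le_mul' ?_ (oscillation_succ_le hD _)
    rw [← ENNReal.ofReal_natCast]
    exact ENNReal.ofReal_le_ofReal (mod_cast hcard)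
  rw [tsum_comp_supNorm, ← ENNReal.summable.sum_add_tsum_nat_add' (k := 2)]
  refine ENNReal.add_ne_top.2 ⟨ENNReal.sum_ne_top.2 fun n _ => ?_, ?_⟩
  · exact ENNReal.mul_ne_top (ENNReal.natCast_ne_top _) (oscillation_ne_top hD n)
  · exact ne_top_of_le_ne_top (hsum.mul_left _).tsum_ofReal_ne_top (ENNReal.tsum_le_tsum hterm)

theorem edist_le_tsum_oscillation (φ : Cfg d A → E) {x y : Cfg d A} {ξ : Cfg d Bool}
    (h : ∀ m, x m ≠ y m → ∃ n, ξ n ∧ supNorm n ≤ supNorm m) :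
    edist (φ x) (φ y) ≤
      ∑' n, {ξ : Cfg d Bool | ξ n}.indicator (fun _ => oscillation φ (supNorm n)) ξ := by
  by_cases hξ : {n | ξ n = true}.Nonempty
  · obtain ⟨n, hn, hmin⟩ := (measure (supNorm (d := d))).wf.has_min _ hξ
    have hagree : ∀ m, supNorm m < supNorm n → x m = y m := fun m hm => by
      by_contra hne
      obtain ⟨n', hn', hle⟩ := h m hne
      exact hmin n' hn' (hle.trans_lt hm)
    calc edist (φ x) (φ y) ≤ oscillation φ (supNorm n) := edist_le_oscillation φ hagree
      _ = {ξ : Cfg d Bool | ξ n}.indicator (fun _ => oscillation φ (supNorm n)) ξ :=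
        (Set.indicator_of_mem (s := {ξ : Cfg d Bool | ξ n}) hn fun _ => _).symm
      _ ≤ _ := ENNReal.le_tsum n
  · have hxy : x = y := funext fun m => by
      by_contra hne
      obtain ⟨n, hn, -⟩ := h m hne
      exact hξ ⟨n, hn⟩
    simp [hxy]

end Oscillation

section InsertionCost

variable {d : ℕ} {A : Type} {k : ℕ} {u : Cfg d A}

theorem edist_shift_insertTiles_le {E : Type*} [PseudoEMetricSpace E] (φ : Cfg d A → E)
    {r : Fin d → ℤ} (hr : ∀ i, 0 ≤ r i ∧ r i < k) (ξ : Cfg d Bool) (x : Cfg d A) :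
    edist (φ (shift r x)) (φ (shift r (insertTiles k u ξ x))) ≤
      ∑' n, {ξ : Cfg d Bool | ξ n}.indicator (fun _ => oscillation φ (supNorm n)) ξ := by
  refine edist_le_tsum_oscillation φ fun m hne => ⟨_, ?_, supNorm_ediv_le (m := m) hr⟩
  contrapose! hne
  simp only [shift, insertTiles, Pi.add_apply, Bool.eq_false_of_not_eq_true hne, cond_false]

theorem lintegral_tsum_indicator {β : Measure (Cfg d Bool)} (hβ : Invariant β)
    (c : (Fin d → ℤ) → ℝ≥0∞) :
    ∫⁻ ξ, ∑' n, {ξ : Cfg d Bool | ξ n}.indicator (fun _ => c n) ξ ∂β =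
      β {ξ | ξ 0} * ∑' n, c n := by
  have hmeas : ∀ n, MeasurableSet {ξ : Cfg d Bool | ξ n} := fun n =>
    measurableSet_eq_fun (measurable_pi_apply n) measurable_const
  rw [lintegral_tsum fun n => (measurable_const.indicator (hmeas n)).aemeasurable,
    ← ENNReal.tsum_mul_left]
  exact tsum_congr fun n => by
    rw [lintegral_indicator_const (hmeas n), measure_apply_eq_true hβ, mul_comm]

variable [MeasurableSpace A] {β : Measure (Cfg d Bool)} [IsProbabilityMeasure β]
  {μ : Measure (Cfg d A)} [IsProbabilityMeasure μ] {φ : Cfg d A → ℝ} {D : ℝ}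

theorem integral_le_integral_shift_insertTilesMeasure_add (hβ : Invariant β) (hμ : Invariant μ)
    (hφ : Measurable φ) (hD : ∀ x, |φ x| ≤ D)
    (hosc : ∑' n : Fin d → ℤ, oscillation φ (supNorm n) ≠ ∞)
    {r : Fin d → ℤ} (hr : ∀ i, 0 ≤ r i ∧ r i < k) :
    ∫ x, φ x ∂μ ≤ ∫ x, φ (shift r x) ∂insertTilesMeasure k u β μ +
      β.real {ξ | ξ 0} * (∑' n : Fin d → ℤ, oscillation φ (supNorm n)).toReal := by
  have hφr : Measurable fun x => φ (shift r x) := hφ.comp (measurable_shift r)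
  have hold : Measurable fun p : Cfg d Bool × Cfg d A => φ (shift r p.2) := hφr.comp measurable_snd
  have hnew : Measurable fun p : Cfg d Bool × Cfg d A => φ (shift r (insertTiles k u p.1 p.2)) :=
    hφr.comp measurable_insertTiles
  have hold_eq : ∫ p : Cfg d Bool × Cfg d A, φ (shift r p.2) ∂β.prod μ = ∫ x, φ x ∂μ := by
    rw [integral_fun_snd (fun x => φ (shift r x)), probReal_univ, one_smul]
    conv_rhs => rw [← hμ r, integral_map (measurable_shift r).aemeasurable
      hφ.aestronglyMeasurable]
  have hdist : ∫⁻ p : Cfg d Bool × Cfg d A,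
      ‖φ (shift r p.2) - φ (shift r (insertTiles k u p.1 p.2))‖ₑ ∂β.prod μ ≤
      β {ξ | ξ 0} * ∑' n : Fin d → ℤ, oscillation φ (supNorm n) := by
    simp_rw [← edist_eq_enorm_sub]
    refine (lintegral_mono fun p => edist_shift_insertTiles_le φ hr _ _).trans_eq ?_
    rw [← lintegral_tsum_indicator hβ]
    exact measurePreserving_fst.lintegral_comp <| Measurable.tsum fun n =>
      measurable_const.indicator (measurableSet_eq_fun (measurable_pi_apply n) measurable_const)
  rw [insertTilesMeasure, integral_map measurable_insertTiles.aemeasurable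
    hφr.aestronglyMeasurable, ← hold_eq, ← sub_le_iff_le_add', ← integral_sub
      (.of_bound hold.aestronglyMeasurable D (.of_forall fun p => hD _))
      (.of_bound hnew.aestronglyMeasurable D (.of_forall fun p => hD _))]
  refine (Real.le_norm_self _).trans ?_
  rw [← toReal_enorm, measureReal_def, ← ENNReal.toReal_mul]
  exact ENNReal.toReal_mono (ENNReal.mul_ne_top (measure_ne_top _ _) hosc)
    ((enorm_integral_le_lintegral_enorm _).trans hdist)

theorem integral_le_integral_shiftAverage_insertTilesMeasure_add [NeZero k] (hβ : Invariant β)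
    (hμ : Invariant μ) (hφ : Measurable φ) (hD : ∀ x, |φ x| ≤ D)
    (hosc : ∑' n : Fin d → ℤ, oscillation φ (supNorm n) ≠ ∞) :
    ∫ x, φ x ∂μ ≤ ∫ x, φ x ∂shiftAverage k (insertTilesMeasure k u β μ) +
      β.real {ξ | ξ 0} * (∑' n : Fin d → ℤ, oscillation φ (supNorm n)).toReal := by
  rw [← sub_le_iff_le_add]
  refine le_integral_shiftAverage (fun a => ?_) hφ fun r hr => sub_le_iff_le_add.2
    (integral_le_integral_shift_insertTilesMeasure_add hβ hμ hφ hD hosc hr)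
  exact .of_bound (hφ.comp (measurable_shift a)).aestronglyMeasurable D (.of_forall fun x => hD _)

end InsertionCost

section EquilibriumStates

variable {d : ℕ} {A : Type}

theorem apply_eq_of_mem_cylE_window {n : ℕ} {x u : Cfg d A} (hx : x ∈ cylE n (window n u))
    {j : Fin d → ℤ} (hj : ∀ i, 0 ≤ j i ∧ j i < n) : x j = u j := by
  obtain ⟨m, rfl⟩ : ∃ m : Fin d → Fin n, site m = j :=
    ⟨fun i => ⟨(j i).toNat, by have := hj i; omega⟩, funext fun i => Int.toNat_of_nonneg (hj i).1⟩
  exact hx m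

variable [MeasurableSpace A] {μ : Measure (Cfg d A)}

theorem measure_agree_on_finset_pos (hμ : Invariant μ)
    (hcyl : ∀ (k : ℕ) [NeZero k] (u : Cfg d A), μ (cylE k (window k u)) ≠ 0)
    (Λ : Finset (Fin d → ℤ)) (w : Cfg d A) : 0 < μ {x | ∀ m ∈ Λ, x m = w m} := by
  let n := Λ.sup supNorm
  let a : Fin d → ℤ := fun _ => n
  have hsub : cylE (2 * n + 1) (window (2 * n + 1) (shift (-a) w)) ⊆
      shift a ⁻¹' {x | ∀ m ∈ Λ, x m = w m} := by
    intro x hx m hm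
    have hle : m ∈ Finset.Icc (-n : Fin d → ℤ) n :=
      supNorm_le_iff_mem_Icc.1 (Finset.le_sup (f := supNorm) hm)
    have hlow : ∀ i, -(n : ℤ) ≤ m i := (Finset.mem_Icc.1 hle).1
    have hupp : ∀ i, m i ≤ n := (Finset.mem_Icc.1 hle).2
    have hwindow : x (a + m) = w (-a + (a + m)) := apply_eq_of_mem_cylE_window hx fun i =>
      ⟨by linarith [hlow i, show (a + m) i = n + m i from rfl],
        by push_cast; linarith [hupp i, show (a + m) i = n + m i from rfl]⟩
    rwa [neg_add_cancel_left] at hwindow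
  rw [← hμ a]
  refine (pos_iff_ne_zero.2 (hcyl _ _)).trans_le ((measure_mono hsub).trans ?_)
  exact Measure.le_map_apply (measurable_shift _).aemeasurable _

variable [Fintype A] [MeasurableSingletonClass A] {φ : Cfg d A → ℝ} {D : ℝ}

theorem entropy_div_le_of_measure_cylE_eq_zero (hφ : Measurable φ) (hD : ∀ x, |φ x| ≤ D)
    (hosc : ∑' n : Fin d → ℤ, oscillation φ (supNorm n) ≠ ∞) (hμ : μ ∈ ES φ 1)
    {k : ℕ} [NeZero k] {u : Cfg d A} (hu : μ (cylE k (window k u)) = 0)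
    {β : Measure (Cfg d Bool)} [IsProbabilityMeasure β] (hβ : Invariant β) :
    entropy β / (k : ℝ) ^ d ≤ β.real {ξ | ξ 0} *
      (Real.log (Fintype.card A) + (∑' n : Fin d → ℤ, oscillation φ (supNorm n)).toReal) := by
  obtain ⟨_, hinv, hmax⟩ := hμ
  have hpressure := entropy_add_integral_le_pressure hD 1
    (periodicInvariant_insertTilesMeasure (u := u) (NeZero.ne k) hβ hinv).invariant_shiftAverage
  have hentropy := entropy_add_le_shiftAverage_insertTilesMeasure hβ hinv hu
  have henergy := integral_le_integral_shiftAverage_insertTilesMeasure_add (k := k) (u := u) hβ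
    hinv hφ hD hosc
  linarith

/-- As `p → 0`, the entropy gain `binEntropy p ∼ p log p⁻¹` beats any cost linear in `p`. -/
theorem exists_mul_lt_binEntropy (K : ℝ) : ∃ p : unitInterval, p * K < Real.binEntropy p := by
  have hpos : 0 < Real.exp (-(|K| + 1)) := Real.exp_pos _
  have hlt : Real.exp (-(|K| + 1)) < 1 := Real.exp_lt_one_iff.2 (by linarith [abs_nonneg K])
  refine ⟨⟨Real.exp (-(|K| + 1)), hpos.le, hlt.le⟩, ?_⟩
  have hsecond : 0 ≤ Real.negMulLog (1 - Real.exp (-(|K| + 1))) :=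
    Real.negMulLog_nonneg (by linarith) (by linarith)
  rw [Real.binEntropy_eq_negMulLog_add_negMulLog_one_sub, Real.negMulLog, Real.log_exp]
  nlinarith [le_abs_self K]

theorem measure_cylE_window_ne_zero (hφ : Measurable φ) (hD : ∀ x, |φ x| ≤ D)
    (hosc : ∑' n : Fin d → ℤ, oscillation φ (supNorm n) ≠ ∞) (hμ : μ ∈ ES φ 1)
    (k : ℕ) [NeZero k] (u : Cfg d A) : μ (cylE k (window k u)) ≠ 0 := by
  intro hu
  obtain ⟨p, hp⟩ := exists_mul_lt_binEntropy
    ((Real.log (Fintype.card A) + (∑' n : Fin d → ℤ, oscillation φ (supNorm n)).toReal) *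
      (k : ℝ) ^ d)
  let ν := ProbabilityTheory.bernoulliMeasure true false p
  have hentropy : Real.binEntropy p ≤ entropy (iidField d ν) :=
    (shannonEntropy_bernoulliMeasure p).symm.trans_le (shannonEntropy_le_entropy_iidField ν)
  have hdensity : (iidField d ν).real {ξ | ξ 0} = p :=
    (iidField_real_apply_mem ν 0 (.singleton true)).trans
      (ProbabilityTheory.bernoulliMeasure_real_apply_of_mem_of_notMem _ (.singleton _)
        (Set.mem_singleton _) (by simp))
  have hcost := entropy_div_le_of_measure_cylE_eq_zero hφ hD hosc hμ hu (invariant_iidField ν)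
  rw [hdensity, div_le_iff₀ (pow_pos (Nat.cast_pos.2 (NeZero.pos k)) d), mul_assoc] at hcost
  exact absurd (hentropy.trans hcost) hp.not_ge

end EquilibriumStates

/-- **Theorem 4.1.** If `Σ_{n ≥ 1} n^{d-1} var_n φ < ∞`, then every equilibrium
state of `φ` is fully supported: every cylinder set has strictly positive measure. -/
theorem statement9 (d : ℕ) (hd : 1 ≤ d) (A : Type) [Fintype A] [TopologicalSpace A]
    [DiscreteTopology A] [MeasurableSpace A] [BorelSpace A]
    (φ : Cfg d A → ℝ) (hφ : Continuous φ)
    (hsum : Summable fun n : ℕ => ((n + 1 : ℕ) : ℝ) ^ (d - 1) * varPot φ (n + 1)) :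
    ∀ μ ∈ ES φ 1, ∀ (Λ : Finset (Fin d → ℤ)) (w : (Fin d → ℤ) → A),
      0 < μ { x : Cfg d A | ∀ m ∈ Λ, x m = w m } := by
  intro μ hμ Λ w
  obtain ⟨D, hD⟩ := isCompact_univ.exists_bound_of_continuousOn hφ.continuousOn
  have hbound : ∀ x, |φ x| ≤ D := fun x => hD x (Set.mem_univ x)
  have hosc := tsum_oscillation_supNorm_ne_top hbound hsum
  exact measure_agree_on_finset_pos hμ.2.1
    (measure_cylE_window_ne_zero hφ.measurable hbound hosc hμ) Λ w

end Freezing
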